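/- Let X be one of the properties: Pareto optimal, rank-maximal, max-cardinality rank-maximal, fair. For every n ≥ 18 the following holds: for every family, indexed by instances I with n agents and n objects, of pairs (T_I, f_I) — where T_I assigns to each pair (a_i, h_j) a threshold T_I(a_i, h_j) ∈ [0,1] and f_I maps {0,1}-valued n×n answer matrices to matchings of G_I — such that f_I(b_v) satisfies X for every instance I and every unit-sum valuation profile v consistent with I (where b_v(i,j) = 1 iff v_i(h_j) ≥ T_I(a_i, h_j)), there exist an instance I with n agents and n objects and a unit-sum valuation profile v consistent with I such that max{SW(μ' | v) : μ' a matching of G_I satisfying X} ≥ (√n/64)·SW(f_I(b_v) | v). -/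

import Mathlib

open Finset
open scoped Classical

/-- A one-sided matching instance with `n` agents and `n` objects.  Agent `i` has a
nonempty acceptable set `accept i` and a weak order `pref i` on it
(`pref i h h'` means agent `i` weakly prefers object `h` to object `h'`). -/
structure OSMInstance (n : ℕ) where
  accept : Fin n → Finset (Fin n)
  accept_nonempty : ∀ i, (accept i).Nonempty
  pref : Fin n → Fin n → Fin n → Prop
  pref_refl : ∀ i h, h ∈ accept i → pref i h h
  pref_trans : ∀ i h₁ h₂ h₃, h₁ ∈ accept i → h₂ ∈ accept i → h₃ ∈ accept i →
    pref i h₁ h₂ → pref i h₂ h₃ → pref i h₁ h₃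
  pref_total : ∀ i h₁ h₂, h₁ ∈ accept i → h₂ ∈ accept i → pref i h₁ h₂ ∨ pref i h₂ h₁

namespace OSMInstance

variable {n : ℕ}

/-- Agent `i` strictly prefers object `h` to object `h'`. -/
def strictPref (I : OSMInstance n) (i h h' : Fin n) : Prop :=
  I.pref i h h' ∧ ¬ I.pref i h' h

/-- The rank of the edge `(i, h)` of `G_I`: one plus the number of acceptable objects
that agent `i` strictly prefers to `h`. -/
noncomputable def edgeRank (I : OSMInstance n) (e : Fin n × Fin n) : ℕ :=
  ((I.accept e.1).filter (fun h' => I.strictPref e.1 h' e.2)).card + 1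

/-- A matching of `G_I`: a set of acceptable (agent, object) pairs in which every agent
and every object occurs at most once. -/
def IsMatching (I : OSMInstance n) (μ : Finset (Fin n × Fin n)) : Prop :=
  (∀ e ∈ μ, e.2 ∈ I.accept e.1) ∧
  (∀ e ∈ μ, ∀ e' ∈ μ, e.1 = e'.1 → e = e') ∧
  (∀ e ∈ μ, ∀ e' ∈ μ, e.2 = e'.2 → e = e')

/-- Total weight of a set of edges under the edge weights `w`. -/
def weightSum (w : Fin n × Fin n → ℝ) (μ : Finset (Fin n × Fin n)) : ℝ :=
  ∑ e ∈ μ, w e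

/-- Social welfare of the set of edges `μ` under the valuation profile `v`. -/
def SW (_I : OSMInstance n) (v : Fin n → Fin n → ℝ) (μ : Finset (Fin n × Fin n)) : ℝ :=
  ∑ e ∈ μ, v e.1 e.2

/-- `μ` is a maximum-weight matching of `G_I` with respect to edge weights `w`. -/
def IsMaxWeightMatching (I : OSMInstance n) (w : Fin n × Fin n → ℝ)
    (μ : Finset (Fin n × Fin n)) : Prop :=
  I.IsMatching μ ∧ ∀ μ', I.IsMatching μ' → weightSum w μ' ≤ weightSum w μ

/-- `μ` is a priority-`p` matching: a maximum-weight matching when every rank-`r` edge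
gets weight `p r`. -/
noncomputable def IsPriorityMatching (I : OSMInstance n) (p : ℕ → ℝ)
    (μ : Finset (Fin n × Fin n)) : Prop :=
  I.IsMaxWeightMatching (fun e => p (I.edgeRank e)) μ

/-- `v` is a valuation profile consistent with the instance: values lie in `[0,1]`,
unacceptable objects have value `0`, and on acceptable objects the values represent
the weak order. -/
def Consistent (I : OSMInstance n) (v : Fin n → Fin n → ℝ) : Prop :=
  (∀ i h, 0 ≤ v i h ∧ v i h ≤ 1) ∧
  (∀ i h, h ∉ I.accept i → v i h = 0) ∧
  (∀ i h h', h ∈ I.accept i → h' ∈ I.accept i → (I.pref i h h' ↔ v i h' ≤ v i h))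

/-- Unit-sum valuations: each agent's values over acceptable objects sum to `1`. -/
def UnitSum (I : OSMInstance n) (v : Fin n → Fin n → ℝ) : Prop :=
  ∀ i, ∑ h ∈ I.accept i, v i h = 1

/-- Unit-range valuations: each agent values some acceptable object `1`, some
acceptable object `0`, and has two non-equivalent acceptable objects. -/
def UnitRange (I : OSMInstance n) (v : Fin n → Fin n → ℝ) : Prop :=
  ∀ i, (∃ h ∈ I.accept i, v i h = 1) ∧ (∃ h ∈ I.accept i, v i h = 0) ∧
    ∃ h ∈ I.accept i, ∃ h' ∈ I.accept i, I.strictPref i h h'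

/-- Agent `i` is unmatched in `μ`. -/
def Unmatched (_I : OSMInstance n) (μ : Finset (Fin n × Fin n)) (i : Fin n) : Prop :=
  ∀ h, (i, h) ∉ μ

/-- Agent `i` weakly prefers their allocation in `μ'` to their allocation in `μ`
(being unmatched is strictly worse than receiving any acceptable object). -/
def WeakImprove (I : OSMInstance n) (μ' μ : Finset (Fin n × Fin n)) (i : Fin n) : Prop :=
  I.Unmatched μ i ∨ ∃ h h', (i, h) ∈ μ ∧ (i, h') ∈ μ' ∧ I.pref i h' h

/-- Agent `i` strictly prefers their allocation in `μ'` to their allocation in `μ`. -/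
def StrictImprove (I : OSMInstance n) (μ' μ : Finset (Fin n × Fin n)) (i : Fin n) : Prop :=
  (I.Unmatched μ i ∧ ∃ h', (i, h') ∈ μ') ∨
    ∃ h h', (i, h) ∈ μ ∧ (i, h') ∈ μ' ∧ I.strictPref i h' h

/-- `μ` is a Pareto optimal matching of `G_I`. -/
def ParetoOptimal (I : OSMInstance n) (μ : Finset (Fin n × Fin n)) : Prop :=
  I.IsMatching μ ∧
    ¬ ∃ μ', I.IsMatching μ' ∧ (∀ i, I.WeakImprove μ' μ i) ∧ ∃ i, I.StrictImprove μ' μ i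

/-- `sig I μ r` is the number of rank-`r` edges of `μ` (as an integer). -/
noncomputable def sig (I : OSMInstance n) (μ : Finset (Fin n × Fin n)) (r : ℕ) : ℤ :=
  ((μ.filter (fun e => I.edgeRank e = r)).card : ℤ)

end OSMInstance

/-- Lexicographic comparison `f ≤ g` of the length-`len` tuples `(f 0, …, f (len-1))`
and `(g 0, …, g (len-1))`. -/
def LexLe (len : ℕ) (f g : ℕ → ℤ) : Prop :=
  (∀ j < len, f j = g j) ∨ ∃ j < len, (∀ i < j, f i = g i) ∧ f j < g j

namespace OSMInstance

variable {n : ℕ}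

/-- `μ` is a rank-maximal matching: it lexicographically maximizes `(s_1, …, s_n)`. -/
noncomputable def RankMaximal (I : OSMInstance n) (μ : Finset (Fin n × Fin n)) : Prop :=
  I.IsMatching μ ∧ ∀ μ', I.IsMatching μ' →
    LexLe n (fun j => I.sig μ' (j + 1)) (fun j => I.sig μ (j + 1))

/-- `μ` is a max-cardinality rank-maximal matching: it lexicographically maximizes
`(Σ_i s_i, s_1, …, s_n)`. -/
noncomputable def MaxCardRankMaximal (I : OSMInstance n) (μ : Finset (Fin n × Fin n)) : Prop :=
  I.IsMatching μ ∧ ∀ μ', I.IsMatching μ' →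
    LexLe (n + 1) (fun j => if j = 0 then (μ'.card : ℤ) else I.sig μ' j)
      (fun j => if j = 0 then (μ.card : ℤ) else I.sig μ j)

/-- `μ` is a fair matching: it lexicographically maximizes
`(Σ_i s_i, -s_n, -s_(n-1), …, -s_1)`. -/
noncomputable def FairMatching (I : OSMInstance n) (μ : Finset (Fin n × Fin n)) : Prop :=
  I.IsMatching μ ∧ ∀ μ', I.IsMatching μ' →
    LexLe (n + 1) (fun j => if j = 0 then (μ'.card : ℤ) else -I.sig μ' (n + 1 - j))
      (fun j => if j = 0 then (μ.card : ℤ) else -I.sig μ (n + 1 - j))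

end OSMInstance

/-- The priority vector for rank-maximal matchings: a rank-`r` edge gets weight
`n ^ (2 * (n - r + 1))`. -/
noncomputable def pRankMaximal (n : ℕ) : ℕ → ℝ :=
  fun r => (n : ℝ) ^ (2 * (n - r + 1))

/-- The priority vector for max-cardinality rank-maximal matchings: a rank-`r` edge gets
weight `n ^ (2 * n) + n ^ (2 * (n - r))`. -/
noncomputable def pMaxCardRankMaximal (n : ℕ) : ℕ → ℝ :=
  fun r => (n : ℝ) ^ (2 * n) + (n : ℝ) ^ (2 * (n - r))

/-- The priority vector for fair matchings: a rank-`r` edge gets weight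
`4 * n ^ (2 * n) - 2 * n ^ (r - 1)`. -/
noncomputable def pFairVec (n : ℕ) : ℕ → ℝ :=
  fun r => 4 * (n : ℝ) ^ (2 * n) - 2 * (n : ℝ) ^ (r - 1)

/-- The set `𝕡` of the three priority vectors of interest. -/
noncomputable def PrioritySet (n : ℕ) : Set (ℕ → ℝ) :=
  {pRankMaximal n, pMaxCardRankMaximal n, pFairVec n}

/-- The four matching properties considered: Pareto optimal, rank-maximal,
max-cardinality rank-maximal, and fair. -/
inductive MatchProp where
  | po | rm | mcrm | fair

/-- `μ` satisfies the property `X` with respect to the instance `I`. -/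
noncomputable def SatisfiesProp {n : ℕ} (X : MatchProp) (I : OSMInstance n)
    (μ : Finset (Fin n × Fin n)) : Prop :=
  match X with
  | .po => I.ParetoOptimal μ
  | .rm => I.RankMaximal μ
  | .mcrm => I.MaxCardRankMaximal μ
  | .fair => I.FairMatching μ

/-!
Every agent ranks two common objects above a third object of their own, which at least two other
agents have as their third object as well. As the common objects serve only two agents, almost all
of the welfare has to come from third objects.

An adversary sees the thresholds and the matching that the algorithm returns. A change in an
agent's value for the third object is absorbed by the value for the best object, where it can be
hidden from the single threshold query. Let `τ = 1 / (4√n)`, and let `A` be the set of agents whose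
threshold for the third object is at most `τ`. In each group of agents with the same third object,
`A` or its complement has at least two members, and one of them is not served by the algorithm. If
this happens for `A` in at least half of the groups, then one such agent per group gets value `1/8`
instead of `τ`; otherwise one such agent per group gets value `τ` instead of `0`. No answer changes,
so the algorithm still does not serve these agents, which costs it a factor of order `√n`.

As all agents accepting an object give it the same rank, a matching that allocates every
acceptable object satisfies each of the four properties, whichever agents it serves; in particular
one that serves the agents with raised values does.
-/

theorem LexLe.of_le {len : ℕ} {f g : ℕ → ℤ} (h : ∀ j < len, f j ≤ g j) : LexLe len f g := by
  by_cases heq : ∀ j < len, f j = g j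
  · exact Or.inl heq
  · have hex : ∃ j, j < len ∧ f j ≠ g j := by simpa using heq
    obtain ⟨hlt, hne⟩ := Nat.find_spec hex
    refine Or.inr ⟨Nat.find hex, hlt, fun i hi => ?_, (h _ hlt).lt_of_ne hne⟩
    by_contra hfg
    exact Nat.find_min hex hi ⟨hi.trans hlt, hfg⟩

namespace OSMInstance

variable {n : ℕ} {I : OSMInstance n} {μ ν : Finset (Fin n × Fin n)} {i h h' : Fin n}

theorem edgeRank_le_of_pref (hh : h ∈ I.accept i) (hh' : h' ∈ I.accept i)
    (hpref : I.pref i h h') : I.edgeRank (i, h) ≤ I.edgeRank (i, h') := by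
  refine Nat.succ_le_succ (card_le_card fun k hk => ?_)
  obtain ⟨hkI, hkh, hhk⟩ := mem_filter.1 hk
  exact mem_filter.2 ⟨hkI, I.pref_trans i k h h' hkI hh hh' hkh hpref,
    fun hk' => hhk (I.pref_trans i h h' k hh hh' hkI hpref hk')⟩

theorem edgeRank_lt_of_strictPref (hh : h ∈ I.accept i) (hh' : h' ∈ I.accept i)
    (hpref : I.strictPref i h h') : I.edgeRank (i, h) < I.edgeRank (i, h') := by
  refine Nat.succ_lt_succ (card_lt_card ((ssubset_iff_of_subset fun k hk => ?_).2 ⟨h, ?_, ?_⟩))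
  · obtain ⟨hkI, hkh, -⟩ := mem_filter.1 hk
    exact mem_filter.2 ⟨hkI, I.pref_trans i k h h' hkI hh hh' hkh hpref.1,
      fun hk' => hpref.2 (I.pref_trans i h' k h hh' hkI hh hk' hkh)⟩
  · exact mem_filter.2 ⟨hh, hpref⟩
  · exact fun hself => (mem_filter.1 hself).2.2 (I.pref_refl i h hh)

section AllocatedWeight

variable {w : Fin n × Fin n → ℝ}

theorem IsMatching.sum_filter_fst_eq (hμ : I.IsMatching μ) (hmem : (i, h) ∈ μ) :
    ∑ e ∈ μ with e.1 = i, w e = w (i, h) := by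
  have hsingle : μ.filter (fun e => e.1 = i) = {(i, h)} :=
    eq_singleton_iff_unique_mem.2 ⟨by simp [hmem], fun e he =>
      hμ.2.1 e (mem_filter.1 he).1 _ hmem (mem_filter.1 he).2⟩
  rw [hsingle, sum_singleton]

theorem Unmatched.sum_filter_fst_eq_zero (hi : I.Unmatched μ i) :
    ∑ e ∈ μ with e.1 = i, w e = 0 := by
  refine sum_eq_zero fun e he => ?_
  obtain ⟨heμ, rfl⟩ := mem_filter.1 he
  exact absurd heμ (hi e.2)

theorem WeakImprove.sum_filter_fst_le (himp : I.WeakImprove ν μ i) (hμ : I.IsMatching μ)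
    (hν : I.IsMatching ν) (hw : ∀ e, 0 ≤ w e)
    (hmono : ∀ h ∈ I.accept i, ∀ h' ∈ I.accept i, I.pref i h' h → w (i, h) ≤ w (i, h')) :
    ∑ e ∈ μ with e.1 = i, w e ≤ ∑ e ∈ ν with e.1 = i, w e := by
  rcases himp with hun | ⟨h, h', hh, hh', hpref⟩
  · rw [hun.sum_filter_fst_eq_zero]
    exact sum_nonneg fun e _ => hw e
  · rw [hμ.sum_filter_fst_eq hh, hν.sum_filter_fst_eq hh']
    exact hmono h (hμ.1 _ hh) h' (hν.1 _ hh') hpref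

theorem StrictImprove.sum_filter_fst_lt (himp : I.StrictImprove ν μ i) (hμ : I.IsMatching μ)
    (hν : I.IsMatching ν) (hw : ∀ e, 0 < w e)
    (hmono : ∀ h ∈ I.accept i, ∀ h' ∈ I.accept i, I.strictPref i h' h → w (i, h) < w (i, h')) :
    ∑ e ∈ μ with e.1 = i, w e < ∑ e ∈ ν with e.1 = i, w e := by
  rcases himp with ⟨hun, h', hh'⟩ | ⟨h, h', hh, hh', hpref⟩
  · rw [hun.sum_filter_fst_eq_zero, hν.sum_filter_fst_eq hh']
    exact hw _
  · rw [hμ.sum_filter_fst_eq hh, hν.sum_filter_fst_eq hh']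
    exact hmono h (hμ.1 _ hh) h' (hν.1 _ hh') hpref

theorem IsPriorityMatching.paretoOptimal {p : ℕ → ℝ} (hpos : ∀ r, 0 < p r) (hanti : StrictAnti p)
    (hμ : I.IsPriorityMatching p μ) : I.ParetoOptimal μ := by
  refine ⟨hμ.1, fun ⟨ν, hν, hweak, i₀, hstrict⟩ => (hμ.2 ν hν).not_gt ?_⟩
  unfold weightSum
  rw [← sum_fiberwise μ Prod.fst, ← sum_fiberwise ν Prod.fst]
  refine sum_lt_sum (fun i _ => ?_) ⟨i₀, mem_univ _, ?_⟩
  · exact (hweak i).sum_filter_fst_le hμ.1 hν (fun _ => (hpos _).le) fun h hh h' hh' hpref =>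
      hanti.antitone (edgeRank_le_of_pref hh' hh hpref)
  · exact hstrict.sum_filter_fst_lt hμ.1 hν (fun _ => hpos _) fun h hh h' hh' hpref =>
      hanti (edgeRank_lt_of_strictPref hh' hh hpref)

end AllocatedWeight

section ObjectRanks

variable {ρ : Fin n → ℕ}

theorem IsMatching.injOn_snd (hμ : I.IsMatching μ) :
    Set.InjOn Prod.snd (μ : Set (Fin n × Fin n)) :=
  fun e he e' he' => hμ.2.2 e he e' he'

theorem IsMatching.card_image_snd (hμ : I.IsMatching μ) : #(μ.image Prod.snd) = #μ :=
  card_image_of_injOn hμ.injOn_snd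

theorem IsMatching.image_snd_subset (hν : I.IsMatching ν)
    (hcov : ∀ i, I.accept i ⊆ μ.image Prod.snd) : ν.image Prod.snd ⊆ μ.image Prod.snd :=
  image_subset_iff.2 fun e he => hcov e.1 (hν.1 e he)

theorem IsMatching.card_le_of_image_snd_subset (hμ : I.IsMatching μ) (hν : I.IsMatching ν)
    (hsub : ν.image Prod.snd ⊆ μ.image Prod.snd) : #ν ≤ #μ := by
  simpa only [hμ.card_image_snd, hν.card_image_snd] using card_le_card hsub

theorem IsMatching.sig_eq_card (hμ : I.IsMatching μ)
    (hρ : ∀ i, ∀ h ∈ I.accept i, I.edgeRank (i, h) = ρ h) (r : ℕ) :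
    I.sig μ r = #{j ∈ μ.image Prod.snd | ρ j = r} := by
  rw [sig, filter_image, card_image_of_injOn (hμ.injOn_snd.mono (coe_subset.2 (filter_subset _ _)))]
  congr 2
  exact filter_congr fun e he => by rw [← hρ e.1 e.2 (hμ.1 e he)]

theorem IsMatching.sig_le_of_image_snd_subset (hμ : I.IsMatching μ) (hν : I.IsMatching ν)
    (hρ : ∀ i, ∀ h ∈ I.accept i, I.edgeRank (i, h) = ρ h)
    (hsub : ν.image Prod.snd ⊆ μ.image Prod.snd) (r : ℕ) : I.sig ν r ≤ I.sig μ r := by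
  rw [hν.sig_eq_card hρ, hμ.sig_eq_card hρ]
  exact_mod_cast card_le_card (filter_subset_filter _ hsub)

theorem IsMatching.isPriorityMatching_of_accept_subset (hμ : I.IsMatching μ)
    (hρ : ∀ i, ∀ h ∈ I.accept i, I.edgeRank (i, h) = ρ h)
    (hcov : ∀ i, I.accept i ⊆ μ.image Prod.snd) {p : ℕ → ℝ} (hp : ∀ r, 0 ≤ p r) :
    I.IsPriorityMatching p μ := by
  have hsum : ∀ κ, I.IsMatching κ →
      weightSum (fun e => p (I.edgeRank e)) κ = ∑ j ∈ κ.image Prod.snd, p (ρ j) := by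
    intro κ hκ
    rw [sum_image hκ.injOn_snd]
    exact sum_congr rfl fun e he => by rw [← hρ e.1 e.2 (hκ.1 e he)]
  refine ⟨hμ, fun ν hν => ?_⟩
  rw [hsum ν hν, hsum μ hμ]
  exact sum_le_sum_of_subset_of_nonneg (hν.image_snd_subset hcov) fun _ _ _ => hp _

theorem IsMatching.fairMatching_of_accept_subset (hμ : I.IsMatching μ)
    (hρ : ∀ i, ∀ h ∈ I.accept i, I.edgeRank (i, h) = ρ h)
    (hcov : ∀ i, I.accept i ⊆ μ.image Prod.snd) : I.FairMatching μ := by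
  refine ⟨hμ, fun ν hν => ?_⟩
  have hsub := hν.image_snd_subset hcov
  rcases (hμ.card_le_of_image_snd_subset hν hsub).lt_or_eq with hlt | heq
  · exact Or.inr ⟨0, by omega, by simp, by simpa using hlt⟩
  · have himage : ν.image Prod.snd = μ.image Prod.snd :=
      eq_of_subset_of_card_le hsub (by rw [hν.card_image_snd, hμ.card_image_snd, heq])
    refine Or.inl fun j _ => ?_
    simp only [heq, hν.sig_eq_card hρ, hμ.sig_eq_card hρ, himage]

theorem IsMatching.satisfiesProp_of_accept_subset (hμ : I.IsMatching μ)
    (hρ : ∀ i, ∀ h ∈ I.accept i, I.edgeRank (i, h) = ρ h)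
    (hcov : ∀ i, I.accept i ⊆ μ.image Prod.snd) (X : MatchProp) : SatisfiesProp X I μ := by
  have hsig : ∀ ν, I.IsMatching ν → ∀ r, I.sig ν r ≤ I.sig μ r := fun ν hν =>
    hμ.sig_le_of_image_snd_subset hν hρ (hν.image_snd_subset hcov)
  cases X with
  | po =>
    exact (hμ.isPriorityMatching_of_accept_subset hρ hcov fun r => by positivity).paretoOptimal
      (fun r => by positivity) (pow_right_strictAnti₀ one_half_pos one_half_lt_one)
  | rm => exact ⟨hμ, fun ν hν => LexLe.of_le fun j _ => hsig ν hν (j + 1)⟩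
  | mcrm =>
    refine ⟨hμ, fun ν hν => LexLe.of_le fun j _ => ?_⟩
    split_ifs
    · exact_mod_cast hμ.card_le_of_image_snd_subset hν (hν.image_snd_subset hcov)
    · exact hsig ν hν j
  | fair => exact hμ.fairMatching_of_accept_subset hρ hcov

end ObjectRanks

theorem IsMatching.SW_le_sum {v : Fin n → Fin n → ℝ} (hμ : I.IsMatching μ) {b : Fin n → ℝ}
    (hb : ∀ j, 0 ≤ b j) (hvb : ∀ e ∈ μ, v e.1 e.2 ≤ b e.2) : I.SW v μ ≤ ∑ j, b j :=
  calc I.SW v μ ≤ ∑ e ∈ μ, b e.2 := sum_le_sum hvb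
    _ = ∑ j ∈ μ.image Prod.snd, b j := (sum_image hμ.injOn_snd).symm
    _ ≤ ∑ j, b j := sum_le_univ_sum_of_nonneg hb

theorem isMatching_image_prodMk {σ : Fin n → Fin n} {s : Finset (Fin n)}
    (hacc : ∀ j ∈ s, j ∈ I.accept (σ j)) (hσ : Set.InjOn σ s) :
    I.IsMatching (s.image fun j => (σ j, j)) := by
  simp only [IsMatching, forall_mem_image]
  exact ⟨hacc, fun j hj j' hj' hjj' => by rw [hσ hj hj' hjj'], fun j _ j' _ hjj' => by
    rw [show j = j' from hjj']⟩

end OSMInstance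

theorem SatisfiesProp.isMatching {n : ℕ} {X : MatchProp} {I : OSMInstance n}
    {μ : Finset (Fin n × Fin n)} (hμ : SatisfiesProp X I μ) : I.IsMatching μ := by
  cases X <;> exact hμ.1

/-- The answers `b_v` to one query per pair `(i, j)`, asking whether agent `i` values object `j` at
least at the threshold `T i j`. -/
noncomputable def thresholdAnswers {n : ℕ} (T v : Fin n → Fin n → ℝ) (i j : Fin n) : Bool :=
  decide (T i j ≤ v i j)

/-- The pattern of the hard instances: every agent `i` ranks the two common objects `top` and
`second`, in this order, above a single further acceptable object `third i`. Agents with the same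
third object form a group, and compete for it. -/
structure ThreeTier (n : ℕ) where
  top : Fin n
  second : Fin n
  third : Fin n → Fin n
  top_ne_second : top ≠ second
  third_ne_top : ∀ i, third i ≠ top
  third_ne_second : ∀ i, third i ≠ second

namespace ThreeTier

variable {n : ℕ} (P : ThreeTier n)

attribute [simp] top_ne_second third_ne_top third_ne_second

@[simp]
theorem second_ne_top : P.second ≠ P.top :=
  P.top_ne_second.symm

/-- The common rank of an object for all agents accepting it; the objects which no agent accepts
get the junk value `3`. -/
def tier (j : Fin n) : ℕ :=
  if j = P.top then 1 else if j = P.second then 2 else 3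

/-- The matching instance with the pattern `P`. -/
def toInstance : OSMInstance n where
  accept i := {P.top, P.second, P.third i}
  accept_nonempty i := ⟨P.top, by simp⟩
  pref _ j k := P.tier j ≤ P.tier k
  pref_refl _ _ _ := le_rfl
  pref_trans _ _ _ _ _ _ _ := le_trans
  pref_total _ _ _ _ _ := le_total _ _

theorem mem_accept {i j : Fin n} :
    j ∈ P.toInstance.accept i ↔ j = P.top ∨ j = P.second ∨ j = P.third i := by
  simp [toInstance]

theorem strictPref_iff {i j k : Fin n} :
    P.toInstance.strictPref i j k ↔ P.tier j < P.tier k :=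
  lt_iff_le_not_ge.symm

theorem edgeRank_eq_tier (i : Fin n) :
    ∀ j ∈ P.toInstance.accept i, P.toInstance.edgeRank (i, j) = P.tier j := by
  intro j hj
  have hbetter : {k ∈ P.toInstance.accept i | P.toInstance.strictPref i k j} =
      {k ∈ ({P.top, P.second} : Finset (Fin n)) | P.tier k < P.tier j} := by
    ext k
    have htier : k = P.third i → ¬ P.tier k < P.tier j := by
      rintro rfl
      simp only [tier, third_ne_top, third_ne_second, if_false]
      split_ifs <;> norm_num
    simp only [mem_filter, mem_accept, strictPref_iff, mem_insert, mem_singleton]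
    tauto
  rw [OSMInstance.edgeRank, hbetter]
  rcases P.mem_accept.1 hj with rfl | rfl | rfl <;> simp [tier, filter_insert, filter_singleton]

/-- The objects that are third for some agent; they index the groups of agents. -/
def groups : Finset (Fin n) :=
  univ.image P.third

theorem third_mem_groups (i : Fin n) : P.third i ∈ P.groups :=
  mem_image_of_mem _ (mem_univ i)

theorem exists_satisfiesProp_of_section {w : Fin n → Fin n}
    (hw : ∀ g ∈ P.groups, P.third (w g) = g) :
    ∃ μ, (∀ X, SatisfiesProp X P.toInstance μ) ∧ ∀ g ∈ P.groups, (w g, g) ∈ μ := by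
  have hw_inj : Set.InjOn w P.groups := fun g hg g' hg' h => by rw [← hw g hg, h, hw g' hg']
  obtain ⟨e, he⟩ := exists_equiv_extend_of_card_eq (card_univ (α := Fin n)).symm
    (subset_univ (P.groups.image w)) hw_inj
  let σ : Fin n → Fin n := fun j => e j
  have hσ : σ.Injective := Subtype.val_injective.comp e.injective
  let s := insert P.top (insert P.second P.groups)
  have hacc : ∀ j ∈ s, j ∈ P.toInstance.accept (σ j) := by
    simp only [s, forall_mem_insert, mem_accept, true_or, or_true, true_and]
    exact fun g hg => .inr (.inr (by simp only [σ, he g hg, hw g hg]))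
  have hμ := OSMInstance.isMatching_image_prodMk hacc hσ.injOn
  refine ⟨_, hμ.satisfiesProp_of_accept_subset P.edgeRank_eq_tier fun i j hj => ?_, fun g hg =>
    mem_image.2 ⟨g, by simp [s, hg], by simp only [σ, he g hg]⟩⟩
  rw [image_image, Function.comp_def, image_id']
  rcases P.mem_accept.1 hj with rfl | rfl | rfl <;> simp [s, P.third_mem_groups]

section Valuation

/-- Valuations for the instance with pattern `P`: agent `i` values the third object at `x i`,
`second` at `1 - a i`, and `top` at the remaining `a i - x i`. For `a i ∈ [5/8, 3/4]` and
`x i ∈ [0, 1/8]` these values are in the order required by the tiers. -/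
noncomputable def val (a x : Fin n → ℝ) (i j : Fin n) : ℝ :=
  if j = P.top then a i - x i else if j = P.second then 1 - a i
  else if j = P.third i then x i else 0

variable {a x : Fin n → ℝ}

@[simp]
theorem val_top (i : Fin n) : P.val a x i P.top = a i - x i := by
  simp [val]

@[simp]
theorem val_second (i : Fin n) : P.val a x i P.second = 1 - a i := by
  simp [val]

@[simp]
theorem val_third (i : Fin n) : P.val a x i (P.third i) = x i := by
  simp [val]

theorem val_of_notMem_accept {i j : Fin n} (hj : j ∉ P.toInstance.accept i) :
    P.val a x i j = 0 := by
  simp only [mem_accept, not_or] at hj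
  simp [val, hj]

theorem unitSum_val : P.toInstance.UnitSum (P.val a x) := by
  intro i
  rw [toInstance, sum_insert (by simp [(P.third_ne_top i).symm]),
    sum_insert (by simp [(P.third_ne_second i).symm]), sum_singleton]
  simp

theorem consistent_val (ha : ∀ i, a i ∈ Set.Icc (5 / 8 : ℝ) (3 / 4))
    (hx : ∀ i, x i ∈ Set.Icc (0 : ℝ) (1 / 8)) : P.toInstance.Consistent (P.val a x) := by
  refine ⟨fun i j => ?_, fun i j => P.val_of_notMem_accept, fun i j k hj hk => ?_⟩ <;>
    obtain ⟨ha₀, ha₁⟩ := ha i <;> obtain ⟨hx₀, hx₁⟩ := hx i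
  · unfold val
    split_ifs <;> constructor <;> linarith
  · have htop : 1 - a i < a i - x i := by linarith
    have hsecond : x i < 1 - a i := by linarith
    have hpref : P.toInstance.pref i j k ↔ P.tier j ≤ P.tier k := Iff.rfl
    rw [hpref]
    rcases P.mem_accept.1 hj with rfl | rfl | rfl <;>
      rcases P.mem_accept.1 hk with rfl | rfl | rfl <;>
      simp [tier, htop.le, htop.not_ge, hsecond.le, hsecond.not_ge, (hsecond.trans htop).le,
        (hsecond.trans htop).not_ge, -tsub_le_iff_right]

/-- The two common objects contribute at most `1` each. -/
theorem SW_val_le {M : Finset (Fin n × Fin n)} (hM : P.toInstance.IsMatching M)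
    (ha : ∀ i, a i ∈ Set.Icc (0 : ℝ) 1) (hx : ∀ i, 0 ≤ x i) {S : Finset (Fin n)} {lo : ℝ}
    (hlo : 0 ≤ lo) (hxM : ∀ i, (i, P.third i) ∈ M → x i ≤ if P.third i ∈ S then lo else 0) :
    P.toInstance.SW (P.val a x) M ≤ 2 + #S * lo := by
  let b : Fin n → ℝ := fun j =>
    (if j = P.top then 1 else 0) + (if j = P.second then 1 else 0) + if j ∈ S then lo else 0
  have hS : ∀ j, 0 ≤ if j ∈ S then lo else 0 := fun j => by split_ifs <;> simp [hlo]
  have hb : ∀ j, 0 ≤ b j := fun j => by have := hS j; positivity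
  have hval : ∀ e ∈ M, P.val a x e.1 e.2 ≤ b e.2 := by
    rintro ⟨i, j⟩ he
    obtain rfl | rfl | rfl : j = _ ∨ j = _ ∨ j = P.third i := P.mem_accept.1 (hM.1 _ he)
    · simpa [b] using by linarith [hS P.top, hx i, (ha i).2]
    · simpa [b] using by linarith [hS P.second, (ha i).1]
    · simpa [b] using hxM i he
  refine (hM.SW_le_sum hb hval).trans_eq ?_
  simp only [b, sum_add_distrib, sum_ite_eq', mem_univ, if_true, sum_ite_mem, univ_inter,
    sum_const, nsmul_eq_mul]
  ring

end Valuation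

section Contest

/-- The groups at least two of whose agents belong to `A`. Whichever matching an algorithm
chooses, some agent of `A` in such a group does not receive the third object. -/
def contested (A : Finset (Fin n)) : Finset (Fin n) :=
  {g | 1 < #{i ∈ A | P.third i = g}}

variable {A : Finset (Fin n)}

theorem mem_contested {g : Fin n} : g ∈ P.contested A ↔ 1 < #{i ∈ A | P.third i = g} := by
  simp [contested]

theorem contested_subset_groups : P.contested A ⊆ P.groups := by
  intro g hg
  obtain ⟨i, hi⟩ := card_pos.1 (zero_lt_one.trans (P.mem_contested.1 hg))
  exact mem_image.2 ⟨i, mem_univ i, (mem_filter.1 hi).2⟩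

theorem card_groups_le_card_contested_add
    (hthree : ∀ g ∈ P.groups, 3 ≤ #{i | P.third i = g}) (A : Finset (Fin n)) :
    #P.groups ≤ #(P.contested A) + #(P.contested Aᶜ) := by
  refine (card_le_card fun g hg => ?_).trans (card_union_le _ _)
  have hsplit : #{i ∈ A | P.third i = g} + #{i ∈ Aᶜ | P.third i = g} = #{i | P.third i = g} := by
    rw [← card_union_of_disjoint (disjoint_filter_filter disjoint_compl_right), ← filter_union,
      union_compl]
  have := hthree g hg
  rw [mem_union, mem_contested, mem_contested]
  omega

theorem exists_section_notMem {M : Finset (Fin n × Fin n)} (hM : P.toInstance.IsMatching M)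
    (A : Finset (Fin n)) :
    ∃ w : Fin n → Fin n, (∀ g ∈ P.groups, P.third (w g) = g) ∧
      ∀ g ∈ P.contested A, w g ∈ A ∧ (w g, g) ∉ M := by
  have hchoice : ∀ g, ∃ i, (g ∈ P.groups → P.third i = g) ∧
      (g ∈ P.contested A → i ∈ A ∧ (i, g) ∉ M) := by
    intro g
    by_cases hg : g ∈ P.contested A
    · obtain ⟨i, hi, j, hj, hij⟩ := one_lt_card.1 (P.mem_contested.1 hg)
      obtain ⟨hiA, hig⟩ := mem_filter.1 hi
      obtain ⟨hjA, hjg⟩ := mem_filter.1 hj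
      by_cases hiM : (i, g) ∈ M
      · exact ⟨j, fun _ => hjg, fun _ => ⟨hjA, fun hjM =>
          hij (congrArg Prod.fst (hM.2.2 _ hiM _ hjM rfl))⟩⟩
      · exact ⟨i, fun _ => hig, fun _ => ⟨hiA, hiM⟩⟩
    · by_cases hgG : g ∈ P.groups
      · obtain ⟨i, -, hig⟩ := mem_image.1 hgG
        exact ⟨i, fun _ => hig, fun h => absurd h hg⟩
      · exact ⟨g, fun h => absurd h hgG, fun h => absurd h hg⟩
  choose w hw hwA using hchoice
  exact ⟨w, hw, hwA⟩

/-- The values that the agents have for their third objects before the adversary raises some of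
them: `lo` for the agents of `A` in contested groups, and `0` for the others. -/
noncomputable def baseValue (A : Finset (Fin n)) (lo : ℝ) (i : Fin n) : ℝ :=
  if i ∈ A ∧ P.third i ∈ P.contested A then lo else 0

/-- The values that the agents have for their third objects after the adversary has raised, for
every contested group `g`, the value of the agent `w g` to `hi`. -/
noncomputable def raisedValue (A : Finset (Fin n)) (w : Fin n → Fin n) (lo hi : ℝ) : Fin n → ℝ :=
  ((P.contested A).image w).piecewise (fun _ => hi) (P.baseValue A lo)

variable {w : Fin n → Fin n} {lo hi : ℝ}

theorem baseValue_mem_Icc {u : ℝ} (hlo : lo ∈ Set.Icc 0 u) (i : Fin n) :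
    P.baseValue A lo i ∈ Set.Icc 0 u := by
  unfold baseValue
  split_ifs
  · exact hlo
  · exact ⟨le_rfl, hlo.1.trans hlo.2⟩

theorem baseValue_le (hlo : 0 ≤ lo) (i : Fin n) :
    P.baseValue A lo i ≤ if P.third i ∈ P.contested A then lo else 0 := by
  unfold baseValue
  grind

theorem raisedValue_of_mem {g : Fin n} (hg : g ∈ P.contested A) :
    P.raisedValue A w lo hi (w g) = hi :=
  piecewise_eq_of_mem _ _ _ (mem_image_of_mem w hg)

theorem raisedValue_of_notMem {i : Fin n} (hi' : i ∉ (P.contested A).image w) :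
    P.raisedValue A w lo hi i = P.baseValue A lo i :=
  piecewise_eq_of_notMem _ _ _ hi'

theorem raisedValue_mem_Icc {u : ℝ} (hlo : lo ∈ Set.Icc 0 u) (hhi : hi ∈ Set.Icc 0 u)
    (i : Fin n) : P.raisedValue A w lo hi i ∈ Set.Icc 0 u := by
  unfold raisedValue piecewise
  split_ifs
  · exact hhi
  · exact P.baseValue_mem_Icc hlo i

theorem le_raisedValue_iff (hw : ∀ g ∈ P.contested A, w g ∈ A ∧ P.third (w g) = g)
    {t : Fin n → ℝ} (ht : ∀ i ∈ A, t i ≤ lo ↔ t i ≤ hi) (i : Fin n) :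
    t i ≤ P.raisedValue A w lo hi i ↔ t i ≤ P.baseValue A lo i := by
  by_cases hi' : i ∈ (P.contested A).image w
  · obtain ⟨g, hg, rfl⟩ := mem_image.1 hi'
    obtain ⟨hwA, hwg⟩ := hw g hg
    rw [P.raisedValue_of_mem hg, baseValue, if_pos ⟨hwA, by rwa [hwg]⟩, ht _ hwA]
  · rw [P.raisedValue_of_notMem hi']

theorem SW_val_raisedValue_le {M : Finset (Fin n × Fin n)} (hM : P.toInstance.IsMatching M)
    {a : Fin n → ℝ} (ha : ∀ i, a i ∈ Set.Icc (0 : ℝ) 1) (hlo : 0 ≤ lo) (hhi : 0 ≤ hi)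
    (hw : ∀ g ∈ P.contested A, P.third (w g) = g) (hwM : ∀ g ∈ P.contested A, (w g, g) ∉ M) :
    P.toInstance.SW (P.val a (P.raisedValue A w lo hi)) M ≤ 2 + #(P.contested A) * lo := by
  refine P.SW_val_le hM ha (fun i => ?_) hlo fun i hiM => ?_
  · exact (P.raisedValue_mem_Icc ⟨hlo, le_max_left lo hi⟩ ⟨hhi, le_max_right lo hi⟩ i).1
  · rw [P.raisedValue_of_notMem]
    · exact P.baseValue_le hlo i
    · intro hi'
      obtain ⟨g, hg, rfl⟩ := mem_image.1 hi'
      exact hwM g hg (by rwa [hw g hg] at hiM)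

theorem le_SW_val_raisedValue {a : Fin n → ℝ} {μ : Finset (Fin n × Fin n)}
    (hv : ∀ i j, 0 ≤ P.val a (P.raisedValue A w lo hi) i j)
    (hw : ∀ g ∈ P.contested A, P.third (w g) = g) (hwμ : ∀ g ∈ P.contested A, (w g, g) ∈ μ) :
    #(P.contested A) * hi ≤ P.toInstance.SW (P.val a (P.raisedValue A w lo hi)) μ := by
  set v := P.val a (P.raisedValue A w lo hi)
  have hvw : ∀ g ∈ P.contested A, v (w g) g = hi := fun g hg => by
    have hthird : v (w g) (P.third (w g)) = P.raisedValue A w lo hi (w g) := P.val_third _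
    rwa [hw g hg, P.raisedValue_of_mem hg] at hthird
  have hinj : Set.InjOn (fun g => (w g, g)) (P.contested A : Set (Fin n)) :=
    fun g _ g' _ h => congrArg Prod.snd h
  calc #(P.contested A) * hi = ∑ g ∈ P.contested A, v (w g) g := by
        rw [sum_congr rfl hvw, sum_const, nsmul_eq_mul]
    _ = ∑ e ∈ (P.contested A).image fun g => (w g, g), v e.1 e.2 :=
        (sum_image (f := fun e => v e.1 e.2) hinj).symm
    _ ≤ P.toInstance.SW v μ :=
        sum_le_sum_of_subset_of_nonneg (image_subset_iff.2 hwμ) fun e _ _ => hv e.1 e.2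

end Contest

section Adversary

variable {T : Fin n → Fin n → ℝ} {a x y : Fin n → ℝ}

/-- Only the queries about `top` and the third objects could tell `x` from `y`. -/
theorem thresholdAnswers_val_congr (hx : ∀ i, x i ∈ Set.Icc (0 : ℝ) (1 / 8))
    (hy : ∀ i, y i ∈ Set.Icc (0 : ℝ) (1 / 8))
    (hTtop : ∀ i, T i P.top ≤ a i - 1 / 8 ∨ a i < T i P.top)
    (hTthird : ∀ i, T i (P.third i) ≤ x i ↔ T i (P.third i) ≤ y i) :
    thresholdAnswers T (P.val a x) = thresholdAnswers T (P.val a y) := by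
  funext i j
  refine decide_eq_decide.2 ?_
  by_cases hj : j ∈ P.toInstance.accept i
  · rcases P.mem_accept.1 hj with rfl | rfl | rfl
    · obtain ⟨hx₀, hx₁⟩ := hx i
      obtain ⟨hy₀, hy₁⟩ := hy i
      rw [val_top, val_top]
      rcases hTtop i with h | h <;> constructor <;> intro <;> linarith
    · rw [val_second, val_second]
    · rw [val_third, val_third, hTthird]
  · rw [P.val_of_notMem_accept hj, P.val_of_notMem_accept hj]

theorem exists_mem_Icc_threshold (t : ℝ) :
    ∃ a ∈ Set.Icc (5 / 8 : ℝ) (3 / 4), t ≤ a - 1 / 8 ∨ a < t := by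
  rcases le_or_gt t (5 / 8) with ht | ht
  · exact ⟨3 / 4, by norm_num, Or.inl (by linarith)⟩
  · exact ⟨5 / 8, by norm_num, Or.inr ht⟩

variable {F : (Fin n → Fin n → Bool) → Finset (Fin n × Fin n)}

/-- The adversary runs the algorithm on the base values, and then raises the values of agents of
`A` who did not receive their third object; the answers, and hence the matching, stay the same. -/
theorem exists_welfare_gap
    (hF : ∀ v, P.toInstance.Consistent v → P.toInstance.UnitSum v →
      P.toInstance.IsMatching (F (thresholdAnswers T v)))
    {A : Finset (Fin n)} {lo hi : ℝ} (hlo : lo ∈ Set.Icc (0 : ℝ) (1 / 8))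
    (hhi : hi ∈ Set.Icc (0 : ℝ) (1 / 8))
    (hTA : ∀ i ∈ A, T i (P.third i) ≤ lo ↔ T i (P.third i) ≤ hi) :
    ∃ v, P.toInstance.Consistent v ∧ P.toInstance.UnitSum v ∧
      P.toInstance.SW v (F (thresholdAnswers T v)) ≤ 2 + #(P.contested A) * lo ∧
      ∃ μ, (∀ X, SatisfiesProp X P.toInstance μ) ∧
        #(P.contested A) * hi ≤ P.toInstance.SW v μ := by
  choose a ha hTtop using fun i => exists_mem_Icc_threshold (T i P.top)
  have hbase : ∀ i, P.baseValue A lo i ∈ Set.Icc (0 : ℝ) (1 / 8) := P.baseValue_mem_Icc hlo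
  have hM := hF _ (P.consistent_val ha hbase) P.unitSum_val
  obtain ⟨w, hw, hwA⟩ := P.exists_section_notMem hM A
  obtain ⟨μ, hμ, hwμ⟩ := P.exists_satisfiesProp_of_section hw
  have hw' : ∀ g ∈ P.contested A, P.third (w g) = g := fun g hg =>
    hw g (P.contested_subset_groups hg)
  have hraised : ∀ i, P.raisedValue A w lo hi i ∈ Set.Icc (0 : ℝ) (1 / 8) :=
    P.raisedValue_mem_Icc hlo hhi
  have hanswers : thresholdAnswers T (P.val a (P.raisedValue A w lo hi)) =
      thresholdAnswers T (P.val a (P.baseValue A lo)) :=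
    P.thresholdAnswers_val_congr hraised hbase hTtop
      (P.le_raisedValue_iff (fun g hg => ⟨(hwA g hg).1, hw' g hg⟩) hTA)
  have hcons := P.consistent_val ha hraised
  refine ⟨_, hcons, P.unitSum_val, ?_, μ, hμ, ?_⟩
  · rw [hanswers]
    exact P.SW_val_raisedValue_le hM
      (fun i => ⟨by linarith [(ha i).1], by linarith [(ha i).2]⟩)
      hlo.1 hhi.1 hw' fun g hg => (hwA g hg).2
  · exact P.le_SW_val_raisedValue (fun i j => (hcons.1 i j).1) hw' fun g hg =>
      hwμ g (P.contested_subset_groups hg)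

theorem exists_mul_SW_le
    (hF : ∀ v, P.toInstance.Consistent v → P.toInstance.UnitSum v →
      P.toInstance.IsMatching (F (thresholdAnswers T v)))
    {A : Finset (Fin n)} {lo hi r : ℝ} (hlo : lo ∈ Set.Icc (0 : ℝ) (1 / 8))
    (hhi : hi ∈ Set.Icc (0 : ℝ) (1 / 8))
    (hTA : ∀ i ∈ A, T i (P.third i) ≤ lo ↔ T i (P.third i) ≤ hi)
    (hr : 0 ≤ r) (hratio : r * (2 + #(P.contested A) * lo) ≤ #(P.contested A) * hi) :
    ∃ v, P.toInstance.Consistent v ∧ P.toInstance.UnitSum v ∧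
      ∃ μ, (∀ X, SatisfiesProp X P.toInstance μ) ∧
        r * P.toInstance.SW v (F (thresholdAnswers T v)) ≤ P.toInstance.SW v μ := by
  obtain ⟨v, hv, hv', hle, μ, hμ, hge⟩ := P.exists_welfare_gap hF hlo hhi hTA
  exact ⟨v, hv, hv', μ, hμ, (mul_le_mul_of_nonneg_left hle hr).trans (hratio.trans hge)⟩

/-- With `τ = 1 / (4√n)`, the agents are split according to whether their threshold for the third
object is at most `τ`. One of the two parts contests a constant fraction of the groups: if it is
the part with low thresholds, third values can be raised from `τ` to `1/8` unnoticed, otherwise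
from `0` to `τ`. -/
theorem exists_sqrt_mul_SW_le (hn : 5 ≤ n) (hthree : ∀ g ∈ P.groups, 3 ≤ #{i | P.third i = g})
    (hgroups : n ≤ 4 * #P.groups)
    (hF : ∀ v, P.toInstance.Consistent v → P.toInstance.UnitSum v →
      P.toInstance.IsMatching (F (thresholdAnswers T v))) :
    ∃ v, P.toInstance.Consistent v ∧ P.toInstance.UnitSum v ∧
      ∃ μ, (∀ X, SatisfiesProp X P.toInstance μ) ∧
        √n / 64 * P.toInstance.SW v (F (thresholdAnswers T v)) ≤ P.toInstance.SW v μ := by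
  have hsq : √n * √n = n := Real.mul_self_sqrt n.cast_nonneg
  have hsqrt : (11 / 5 : ℝ) ≤ √n := by
    have : (5 : ℝ) ≤ n := by exact_mod_cast hn
    exact Real.le_sqrt_of_sq_le (by linarith)
  let τ : ℝ := 1 / (4 * √n)
  have hτ_mul : √n * τ = 1 / 4 := by
    simp only [τ]
    field_simp
  have hτ_mem : τ ∈ Set.Icc (0 : ℝ) (1 / 8) :=
    ⟨by positivity, one_div_le_one_div_of_le (by norm_num) (by linarith)⟩
  have hn_mul : √n = 4 * (n * τ) := by linear_combination (-4 * √n) * hτ_mul + 4 * τ * hsq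
  let A : Finset (Fin n) := {i | T i (P.third i) ≤ τ}
  have hcard := P.card_groups_le_card_contested_add hthree A
  rcases le_total #(P.contested Aᶜ) #(P.contested A) with hmaj | hmaj
  · have hk : (n : ℝ) ≤ 8 * #(P.contested A) := by exact_mod_cast (by omega)
    refine P.exists_mul_SW_le (A := A) (hi := 1 / 8) hF hτ_mem (by norm_num) (fun i hi => ?_)
      (by positivity) ?_
    · have hi' : T i (P.third i) ≤ τ := (mem_filter.1 hi).2
      exact iff_of_true hi' (hi'.trans hτ_mem.2)
    · calc √n / 64 * (2 + #(P.contested A) * τ) = √n / 32 + #(P.contested A) / 256 := by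
            linear_combination (#(P.contested A) / 64 : ℝ) * hτ_mul
        _ ≤ #(P.contested A) * (1 / 8) := by nlinarith
  · have hk : (n : ℝ) ≤ 8 * #(P.contested Aᶜ) := by exact_mod_cast (by omega)
    refine P.exists_mul_SW_le (A := Aᶜ) (lo := 0) hF (by norm_num) hτ_mem (fun i hi => ?_)
      (by positivity) ?_
    · have hi' : ¬ T i (P.third i) ≤ τ := by simpa [A] using hi
      exact iff_of_false (fun h => hi' (h.trans hτ_mem.1)) hi'
    · linarith [mul_le_mul_of_nonneg_right hk hτ_mem.1]

end Adversary

section Cyclic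

/-- The pattern in which the third objects are the objects `0, …, m - 1`, assigned cyclically to
the agents, and the two common objects are `m` and `m + 1`. -/
def cyclic {m : ℕ} (hm : 0 < m) (hmn : m + 2 ≤ n) : ThreeTier n where
  top := ⟨m, by omega⟩
  second := ⟨m + 1, by omega⟩
  third i := ⟨i % m, (Nat.mod_lt _ hm).trans (by omega)⟩
  top_ne_second := by simp
  third_ne_top i := by simp [(Nat.mod_lt _ hm).ne]
  third_ne_second i := by simp [((Nat.mod_lt _ hm).trans (Nat.lt_succ_self m)).ne]

variable {m : ℕ} (hm : 0 < m) (hmn : m + 2 ≤ n)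

theorem groups_cyclic : (cyclic hm hmn).groups = ({g | (g : ℕ) < m} : Finset (Fin n)) := by
  ext g
  simp only [groups, cyclic, mem_image, mem_univ, true_and, mem_filter, Fin.ext_iff]
  exact ⟨fun ⟨i, hi⟩ => hi ▸ Nat.mod_lt _ hm, fun hg => ⟨g, Nat.mod_eq_of_lt hg⟩⟩

theorem card_groups_cyclic : #(cyclic hm hmn).groups = m := by
  rw [groups_cyclic, Fin.card_filter_val_lt, min_eq_right (by omega)]

theorem le_card_filter_third_cyclic {k : ℕ} (hk : k * m ≤ n) {g : Fin n}
    (hg : g ∈ (cyclic hm hmn).groups) : k ≤ #{i | (cyclic hm hmn).third i = g} := by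
  have hgm : (g : ℕ) < m := by simpa [groups_cyclic] using hg
  have hlt : ∀ j : Fin k, g + m * j < n := fun j => by nlinarith [j.isLt]
  let member : Fin k → Fin n := fun j => ⟨g + m * j, hlt j⟩
  have hinj : member.Injective := fun j j' h => by
    simpa [member, Fin.ext_iff, hm.ne'] using h
  calc k = #(univ.image member) := by rw [card_image_of_injective _ hinj, card_fin]
    _ ≤ _ := card_le_card (image_subset_iff.2 fun j _ => by
        simp [cyclic, member, Fin.ext_iff, Nat.mod_eq_of_lt hgm])

end Cyclic

end ThreeTier

theorem nonadaptive_unitSum_lower_bound_general (n : ℕ) (hn : 6 ≤ n) :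
    ∃ I : OSMInstance n, ∀ (T : Fin n → Fin n → ℝ)
      (F : (Fin n → Fin n → Bool) → Finset (Fin n × Fin n)),
      (∀ v, I.Consistent v → I.UnitSum v → I.IsMatching (F (thresholdAnswers T v))) →
      ∃ v, I.Consistent v ∧ I.UnitSum v ∧ ∃ μ, (∀ X, SatisfiesProp X I μ) ∧
        √n / 64 * I.SW v (F (thresholdAnswers T v)) ≤ I.SW v μ := by
  have hm : 0 < n / 3 := by omega
  have hmn : n / 3 + 2 ≤ n := by omega
  refine ⟨(ThreeTier.cyclic hm hmn).toInstance, fun T F hF =>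
    ThreeTier.exists_sqrt_mul_SW_le _ (by omega) (fun g hg => ?_) ?_ hF⟩
  · exact ThreeTier.le_card_filter_third_cyclic hm hmn (by omega) hg
  · rw [ThreeTier.card_groups_cyclic]
    omega

/-- for `n ≥ 18`, every non-adaptive deterministic algorithm asking one
binary threshold query per (agent, object) pair that always outputs a matching
satisfying `X` loses a factor of at least `√n / 64` in welfare on some instance with
unit-sum valuations. -/
theorem nonadaptive_unitSum_lower_bound (X : MatchProp) (n : ℕ) (hn : 18 ≤ n)
    (T : OSMInstance n → Fin n → Fin n → ℝ)
    (hT : ∀ I i j, 0 ≤ T I i j ∧ T I i j ≤ 1)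
    (f : OSMInstance n → (Fin n → Fin n → Bool) → Finset (Fin n × Fin n))
    (hf : ∀ I : OSMInstance n, ∀ v : Fin n → Fin n → ℝ,
      I.Consistent v → I.UnitSum v →
        SatisfiesProp X I (f I (fun i j => decide (T I i j ≤ v i j)))) :
    ∃ I : OSMInstance n, ∃ v : Fin n → Fin n → ℝ,
      I.Consistent v ∧ I.UnitSum v ∧
      ∃ μ', SatisfiesProp X I μ' ∧
        Real.sqrt n / 64 *
          I.SW v (f I (fun i j => decide (T I i j ≤ v i j))) ≤ I.SW v μ' := by
  obtain ⟨I, hI⟩ := nonadaptive_unitSum_lower_bound_general n (by omega)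
  obtain ⟨v, hv, hv', μ, hμ, hle⟩ := hI (T I) (f I) fun v hv hv' => (hf I v hv hv').isMatching
  exact ⟨I, v, hv, hv', μ, hμ X, hle⟩
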